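/- Let n ≥ 1, γ > −min(2,n), α > 1 with α ≥ max(1, 1+γ/n), γ/(α−1) ≤ s ≤ n, α ≤ q ≤ ∞, 0 < r ≤ ∞, and assume s/n + 1/q > 0 or (s/n + 1/q = 0 and r = ∞), and s/n + 1/q < 1 or (s/n + 1/q = 1 and r ≤ 1). Assume the single critical condition s/n + 1/q = 1/Q_c < 1/q_c and r ≤ α. Let T > 0, let u₀ be measurable, and let u₁, u₂ be two mild solutions of the Hardy–Hénon equation on (0,T) with the same initial data u₀ such that ess sup_{t∈(0,T)} ‖u_i(t)‖_{K̇^s_{q,r}} < ∞ for i = 1,2. Then u₁(t,x) = u₂(t,x) for almost every (t,x) ∈ (0,T)×ℝⁿ. -/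

import Mathlib

open MeasureTheory Set ENNReal Filter

noncomputable section

abbrev Euc (n : ℕ) : Type := EuclideanSpace ℝ (Fin n)

def annulus (n : ℕ) (j : ℤ) : Set (Euc n) :=
  {x : Euc n | (2 : ℝ) ^ (j - 1) ≤ ‖x‖ ∧ ‖x‖ < (2 : ℝ) ^ j}

def herzNorm (n : ℕ) (s : ℝ) (q r : ℝ≥0∞) (f : Euc n → ℝ) : ℝ≥0∞ :=
  if r = ⊤ then
    ⨆ j : ℤ, ENNReal.ofReal ((2 : ℝ) ^ ((j : ℝ) * s)) *
      eLpNorm ((annulus n j).indicator f) q volume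
  else
    (∑' j : ℤ, (ENNReal.ofReal ((2 : ℝ) ^ ((j : ℝ) * s)) *
      eLpNorm ((annulus n j).indicator f) q volume) ^ r.toReal) ^ (1 / r.toReal)

def heatKernel (n : ℕ) (t : ℝ) (x y : Euc n) : ℝ :=
  (4 * Real.pi * t) ^ (-(n : ℝ) / 2) * Real.exp (-‖x - y‖ ^ 2 / (4 * t))

def heatSemigroup (n : ℕ) (t : ℝ) (f : Euc n → ℝ) (x : Euc n) : ℝ :=
  ∫ y, heatKernel n t x y * f y

def nonlin (n : ℕ) (γ α : ℝ) (v : Euc n → ℝ) (x : Euc n) : ℝ :=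
  ‖x‖ ^ γ * |v x| ^ (α - 1) * v x

/-- `u` is a mild solution of the Hardy–Hénon equation
`∂ₜu - Δu = |x|^γ |u|^{α-1} u` on `(0,T) × ℝⁿ` with initial data `u₀`:
`u` is measurable, and for a.e. `(t,x) ∈ (0,T) × ℝⁿ` the relevant integrals
converge absolutely and the Duhamel formula holds. -/
def IsMildSolution (n : ℕ) (γ α T : ℝ) (u₀ : Euc n → ℝ) (u : ℝ → Euc n → ℝ) : Prop :=
  Measurable (Function.uncurry u) ∧
  ∀ᵐ p : ℝ × Euc n ∂((volume.restrict (Set.Ioo (0 : ℝ) T)).prod volume),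
    (Integrable (fun y => heatKernel n p.1 p.2 y * u₀ y) volume) ∧
    (Integrable (fun z : ℝ × Euc n =>
        heatKernel n (p.1 - z.1) p.2 z.2 * nonlin n γ α (u z.1) z.2)
      ((volume.restrict (Set.Ioo (0 : ℝ) p.1)).prod volume)) ∧
    u p.1 p.2 = heatSemigroup n p.1 u₀ p.2 +
      ∫ z : ℝ × Euc n, heatKernel n (p.1 - z.1) p.2 z.2 * nonlin n γ α (u z.1) z.2
        ∂((volume.restrict (Set.Ioo (0 : ℝ) p.1)).prod volume)

/-!
Let `h t = ∫ |x|^γ (|u₁|^{α-1} + |u₂|^{α-1}) |u₁ - u₂| dx` at time `t`. At the critical scaling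
`s/n + 1/q = 1/Q_c` with `r ≤ α ≤ q`, the Herz space embeds into `L^α(|x|^γ dx)`, so `h` is bounded.
The Duhamel formula controls `u₁ - u₂` by the heat evolution of `|x|^γ |u₁|^{α-1} u₁ - …`, hence by
that of the density defining `h`. Integrating it against the potentials `|x|^γ |uᵢ|^{α-1}`, whose
heat evolution at time `σ` is `O(σ^{-δ})` in `L^∞` with `δ = (n(α-1)/Q_c - γ)/2`, gives the Volterra
inequality `h t ≤ C ∫₀ᵗ (t-τ)^{-δ} h τ dτ`. As `δ < 1` is precisely `1/Q_c < 1/q_c`, it forces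
`h = 0`.
-/

open scoped NNReal

section PowerDifference

variable {α x y : ℝ}

lemma tangent_le_rpow (hα : 1 ≤ α) (hx : 0 ≤ x) (hy : 0 ≤ y) :
    x ^ (α - 1) * (x + α * (y - x)) ≤ y ^ α := by
  rcases hx.eq_or_lt with rfl | hx
  · rcases hα.eq_or_lt with rfl | hα
    · simp
    · rw [Real.zero_rpow (sub_pos.2 hα).ne', zero_mul]
      positivity
  have bernoulli : 1 + α * (y / x - 1) ≤ y ^ α / x ^ α := by
    have hyx : -1 ≤ y / x - 1 := by linarith [div_nonneg hy hx.le]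
    have h := one_add_mul_self_le_rpow_one_add hyx hα
    rwa [add_sub_cancel, Real.div_rpow hy hx.le] at h
  calc x ^ (α - 1) * (x + α * (y - x)) = (1 + α * (y / x - 1)) * x ^ α := by
        rw [← sub_add_cancel α 1, Real.rpow_add_one hx.ne', sub_add_cancel]
        field_simp
    _ ≤ y ^ α := (le_div_iff₀ (by positivity)).1 bernoulli

lemma rpow_sub_one_sub_mul_le (hα : 1 ≤ α) (hx : 0 ≤ x) (hy : 0 ≤ y) :
    (x ^ (α - 1) - y ^ (α - 1)) * y ≤ (α - 1) * (x ^ (α - 1) * (x - y)) := by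
  have tangent := tangent_le_rpow hα hx hy
  have split : y ^ α = y ^ (α - 1) * y := by
    rw [← Real.rpow_add_one' hy (by linarith), sub_add_cancel]
  linarith

lemma abs_rpow_mul_self_sub_le (hα : 1 ≤ α) (a b : ℝ) :
    |(|a| ^ (α - 1) * a - |b| ^ (α - 1) * b)| ≤
      α * ((|a| ^ (α - 1) + |b| ^ (α - 1)) * |a - b|) := by
  wlog h : |b| ≤ |a| generalizing a b with swapped
  · rw [abs_sub_comm, abs_sub_comm a b, add_comm (|a| ^ (α - 1))]
    exact swapped b a (le_of_not_ge h)
  have hpow : |b| ^ (α - 1) ≤ |a| ^ (α - 1) := by gcongr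
  calc |(|a| ^ (α - 1) * a - |b| ^ (α - 1) * b)|
      = |(|a| ^ (α - 1) * (a - b) + (|a| ^ (α - 1) - |b| ^ (α - 1)) * b)| := by ring_nf
    _ ≤ |(|a| ^ (α - 1) * (a - b))| + |((|a| ^ (α - 1) - |b| ^ (α - 1)) * b)| := abs_add_le _ _
    _ = |a| ^ (α - 1) * |a - b| + (|a| ^ (α - 1) - |b| ^ (α - 1)) * |b| := by
        rw [abs_mul, abs_mul, abs_of_nonneg (sub_nonneg.2 hpow), abs_of_nonneg (by positivity)]
    _ ≤ |a| ^ (α - 1) * |a - b| + (α - 1) * (|a| ^ (α - 1) * (|a| - |b|)) := by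
        grw [rpow_sub_one_sub_mul_le hα (abs_nonneg a) (abs_nonneg b)]
    _ ≤ |a| ^ (α - 1) * |a - b| + (α - 1) * (|a| ^ (α - 1) * |a - b|) := by
        have hα' : 0 ≤ α - 1 := sub_nonneg.2 hα
        grw [abs_sub_abs_le_abs_sub a b]
    _ = α * (|a| ^ (α - 1) * |a - b|) := by ring
    _ ≤ α * ((|a| ^ (α - 1) + |b| ^ (α - 1)) * |a - b|) := by
        gcongr
        exact le_add_of_nonneg_right (by positivity)

end PowerDifference

section Volterra

lemma setLIntegral_Ioo_comp_sub_left (f : ℝ → ℝ≥0∞) (t : ℝ) :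
    ∫⁻ τ in Ioo 0 t, f (t - τ) = ∫⁻ σ in Ioo 0 t, f σ := by
  simpa using (Measure.measurePreserving_sub_left volume t).setLIntegral_comp_preimage_emb
    (MeasurableEquiv.subLeft t).measurableEmbedding f (Ioo 0 t)

variable {k h : ℝ → ℝ≥0∞} {T : ℝ}

lemma tendsto_setLIntegral_exp_neg_mul (hk : Measurable k) (hkT : ∫⁻ σ in Ioo 0 T, k σ ≠ ⊤) :
    Tendsto (fun l : ℝ => ∫⁻ σ in Ioo 0 T, ENNReal.ofReal (Real.exp (-(l * σ))) * k σ)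
      atTop (nhds 0) := by
  rw [← lintegral_zero (μ := volume.restrict (Ioo 0 T))]
  refine tendsto_lintegral_filter_of_dominated_convergence k ?_ ?_ hkT ?_
  · exact .of_forall fun l => by fun_prop
  · filter_upwards [eventually_ge_atTop 0] with l hl
    filter_upwards [ae_restrict_mem measurableSet_Ioo] with σ hσ
    refine mul_le_of_le_one_left' (ENNReal.ofReal_le_one.2 (Real.exp_le_one_iff.2 ?_))
    exact neg_nonpos.2 (mul_nonneg hl hσ.1.le)
  · filter_upwards [ae_restrict_mem measurableSet_Ioo, ae_lt_top hk hkT] with σ hσ hkσ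
    have hexp : Tendsto (fun l : ℝ => Real.exp (-(l * σ))) atTop (nhds 0) :=
      Real.tendsto_exp_neg_atTop_nhds_zero.comp (tendsto_id.atTop_mul_const hσ.1)
    simpa using ENNReal.Tendsto.mul_const (ENNReal.tendsto_ofReal hexp) (.inr hkσ.ne)

lemma exp_mul_setLIntegral_le {l t : ℝ} {M : ℝ≥0∞} (hk : Measurable k)
    (hM : ∀ᵐ τ ∂volume.restrict (Ioo 0 t), ENNReal.ofReal (Real.exp (-(l * τ))) * h τ ≤ M) :
    ENNReal.ofReal (Real.exp (-(l * t))) * ∫⁻ τ in Ioo 0 t, k (t - τ) * h τ ≤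
      (∫⁻ σ in Ioo 0 t, ENNReal.ofReal (Real.exp (-(l * σ))) * k σ) * M := by
  rw [← lintegral_const_mul' _ _ ENNReal.ofReal_ne_top,
    ← setLIntegral_Ioo_comp_sub_left (fun σ => ENNReal.ofReal (Real.exp (-(l * σ))) * k σ),
    ← lintegral_mul_const _ (by fun_prop)]
  refine lintegral_mono_ae ?_
  filter_upwards [hM] with τ hτ
  have hexp : Real.exp (-(l * t)) = Real.exp (-(l * (t - τ))) * Real.exp (-(l * τ)) := by
    rw [← Real.exp_add]
    ring_nf
  calc ENNReal.ofReal (Real.exp (-(l * t))) * (k (t - τ) * h τ)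
      = ENNReal.ofReal (Real.exp (-(l * (t - τ)))) * k (t - τ) *
          (ENNReal.ofReal (Real.exp (-(l * τ))) * h τ) := by
        rw [hexp, ENNReal.ofReal_mul (Real.exp_nonneg _)]
        ring
    _ ≤ ENNReal.ofReal (Real.exp (-(l * (t - τ)))) * k (t - τ) * M := by gcongr

/- Under the Bielecki weight `exp (-l t)` the Volterra operator has norm at most `1 / 2` once `l` is
large. -/
lemma ae_eq_zero_of_le_volterra {H : ℝ≥0∞} (hk : Measurable k)
    (hkT : ∫⁻ σ in Ioo 0 T, k σ ≠ ⊤) (hH : H ≠ ⊤)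
    (hbound : ∀ᵐ t ∂volume.restrict (Ioo 0 T), h t ≤ H)
    (hvolterra : ∀ᵐ t ∂volume.restrict (Ioo 0 T), h t ≤ ∫⁻ τ in Ioo 0 t, k (t - τ) * h τ) :
    ∀ᵐ t ∂volume.restrict (Ioo 0 T), h t = 0 := by
  obtain ⟨l, hl, hkl⟩ : ∃ l : ℝ, 0 ≤ l ∧
      ∫⁻ σ in Ioo 0 T, ENNReal.ofReal (Real.exp (-(l * σ))) * k σ < 2⁻¹ :=
    ((eventually_ge_atTop 0).and
      ((tendsto_setLIntegral_exp_neg_mul hk hkT).eventually_lt_const (by simp))).exists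
  set w : ℝ → ℝ≥0∞ := fun t => ENNReal.ofReal (Real.exp (-(l * t))) * h t with hw
  set M := essSup w (volume.restrict (Ioo 0 T))
  have hwM : ∀ᵐ t ∂volume.restrict (Ioo 0 T), w t ≤ M := ENNReal.ae_le_essSup w
  have hM_top : M ≠ ⊤ := by
    refine ne_top_of_le_ne_top hH (essSup_le_of_ae_le _ ?_)
    filter_upwards [hbound, ae_restrict_mem measurableSet_Ioo] with t ht htT
    refine (mul_le_of_le_one_left' (ENNReal.ofReal_le_one.2 (Real.exp_le_one_iff.2 ?_))).trans ht
    exact neg_nonpos.2 (mul_nonneg hl htT.1.le)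
  have contraction : M ≤ 2⁻¹ * M := by
    refine essSup_le_of_ae_le _ ?_
    filter_upwards [hvolterra, ae_restrict_mem measurableSet_Ioo] with t ht htT
    have hsub : Ioo 0 t ⊆ Ioo 0 T := Ioo_subset_Ioo_right htT.2.le
    calc w t ≤ ENNReal.ofReal (Real.exp (-(l * t))) * ∫⁻ τ in Ioo 0 t, k (t - τ) * h τ := by
          simp only [hw]
          gcongr
      _ ≤ (∫⁻ σ in Ioo 0 t, ENNReal.ofReal (Real.exp (-(l * σ))) * k σ) * M :=
          exp_mul_setLIntegral_le hk (ae_restrict_of_ae_restrict_of_subset hsub hwM)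
      _ ≤ 2⁻¹ * M := by
          gcongr
          exact (lintegral_mono_set hsub).trans hkl.le
  have hM_zero : M = 0 := by
    by_contra hne
    rw [mul_comm, ← div_eq_mul_inv] at contraction
    exact (ENNReal.half_lt_self hne hM_top).not_ge contraction
  filter_upwards [hwM] with t ht
  simpa [hM_zero, hw, (Real.exp_pos _).not_ge] using ht

end Volterra

section Scaling

open Module

variable {E F : Type*} [NormedAddCommGroup E] [NormedSpace ℝ E] [FiniteDimensional ℝ E]
  [MeasurableSpace E] [BorelSpace E] [NormedAddCommGroup F]

lemma eLpNorm_comp_smul (μ : Measure E) [μ.IsAddHaarMeasure] (f : E → F) (p : ℝ≥0∞) {c : ℝ}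
    (hc : 0 < c) :
    eLpNorm (fun x => f (c • x)) p μ =
      ENNReal.ofReal (c ^ (-((finrank ℝ E : ℝ) * (p⁻¹).toReal))) * eLpNorm f p μ := by
  have hpos : 0 < |(c ^ finrank ℝ E)⁻¹| := by positivity
  calc eLpNorm (fun x => f (c • x)) p μ = eLpNorm f p (μ.map (c • ·)) :=
        ((Homeomorph.smulOfNeZero c hc.ne').measurableEmbedding.eLpNorm_map_measure).symm
    _ = ENNReal.ofReal |(c ^ finrank ℝ E)⁻¹| ^ (p⁻¹).toReal * eLpNorm f p μ := by
        rw [Measure.map_addHaar_smul _ hc.ne', eLpNorm_smul_measure_of_ne_zero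
          (ENNReal.ofReal_pos.2 hpos).ne', smul_eq_mul, one_div]
    _ = _ := by
        rw [ENNReal.ofReal_rpow_of_pos hpos, abs_of_pos (by positivity), ← Real.rpow_natCast,
          ← Real.rpow_neg hc.le, ← Real.rpow_mul hc.le, neg_mul]

lemma integrableOn_ball_norm_rpow [Nontrivial E] (μ : Measure E) [μ.IsAddHaarMeasure] {c : ℝ}
    (hc : -(finrank ℝ E : ℝ) < c) (R : ℝ) :
    IntegrableOn (fun x : E => ‖x‖ ^ c) (Metric.ball 0 R) μ := by
  rcases le_or_gt R 0 with hR | hR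
  · simp [Metric.ball_eq_empty.2 hR]
  have radial : IntegrableOn (fun ρ : ℝ => ρ ^ (finrank ℝ E - 1) • (Iio R).indicator (· ^ c) ρ)
      (Ioi 0) := by
    have h : IntegrableOn (fun ρ : ℝ => ρ ^ ((finrank ℝ E : ℝ) - 1 + c)) (Ioo 0 R) := by
      rw [intervalIntegral.integrableOn_Ioo_rpow_iff hR]
      linarith
    refine ((h.integrable_indicator measurableSet_Ioo).integrableOn (s := Ioi 0)).congr_fun ?_
      measurableSet_Ioi
    intro ρ (hρ : 0 < ρ)
    by_cases hρR : ρ < R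
    · simp [hρ, hρR, Real.rpow_add hρ, ← Nat.cast_pred (R := ℝ) finrank_pos]
    · simp [hρR]
  have h := (integrable_fun_norm_addHaar μ (f := (Iio R).indicator (· ^ c))).2 radial
  rw [← integrable_indicator_iff Metric.isOpen_ball.measurableSet]
  refine h.congr (.of_forall fun x => ?_)
  simp [indicator]

lemma integrable_exp_neg_mul_sq_norm {V : Type*} [NormedAddCommGroup V] [InnerProductSpace ℝ V]
    [FiniteDimensional ℝ V] [MeasurableSpace V] [BorelSpace V] {b : ℝ} (hb : 0 < b) :
    Integrable (fun v : V => Real.exp (-b * ‖v‖ ^ 2)) := by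
  refine .of_integral_ne_zero ?_
  rw [GaussianFourier.integral_rexp_neg_mul_sq_norm hb]
  positivity

end Scaling

section HeatKernel

variable {n : ℕ} {t : ℝ}

lemma heatKernel_nonneg (ht : 0 ≤ t) (x y : Euc n) : 0 ≤ heatKernel n t x y := by
  unfold heatKernel
  positivity

lemma heatKernel_one_le (x y : Euc n) : heatKernel n 1 x y ≤ 1 := by
  refine mul_le_one₀ (Real.rpow_le_one_of_one_le_of_nonpos ?_ ?_) (Real.exp_nonneg _)
    (Real.exp_le_one_iff.2 ?_)
  · linarith [Real.pi_gt_three]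
  · exact div_nonpos_of_nonpos_of_nonneg (by simp) zero_le_two
  · exact div_nonpos_of_nonpos_of_nonneg (by simp) (by norm_num)

lemma heatKernel_eq_smul (ht : 0 < t) (x y : Euc n) :
    heatKernel n t x y =
      t ^ (-(n : ℝ) / 2) * heatKernel n 1 ((√t)⁻¹ • x) ((√t)⁻¹ • y) := by
  have hnorm : ‖(√t)⁻¹ • x - (√t)⁻¹ • y‖ ^ 2 = ‖x - y‖ ^ 2 / t := by
    rw [← smul_sub, norm_smul, mul_pow, Real.norm_eq_abs, sq_abs, inv_pow, Real.sq_sqrt ht.le,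
      inv_mul_eq_div]
  rw [heatKernel, heatKernel, hnorm, Real.mul_rpow (by positivity) ht.le]
  field_simp

lemma memLp_heatKernel (ht : 0 < t) (y : Euc n) {p : ℝ≥0∞} (hp : p ≠ 0) (hp_top : p ≠ ⊤) :
    MemLp (fun x => heatKernel n t x y) p := by
  have hp_pos : 0 < p.toReal := ENNReal.toReal_pos hp hp_top
  rw [← integrable_norm_rpow_iff (by unfold heatKernel; fun_prop) hp hp_top]
  refine (((integrable_exp_neg_mul_sq_norm (V := Euc n) (b := p.toReal / (4 * t))
    (by positivity)).comp_sub_right y).const_mul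
      (((4 * Real.pi * t) ^ (-(n : ℝ) / 2)) ^ p.toReal)).congr (.of_forall fun x => ?_)
  beta_reduce
  rw [Real.norm_of_nonneg (heatKernel_nonneg ht.le x y), heatKernel,
    Real.mul_rpow (by positivity) (Real.exp_nonneg _), ← Real.exp_mul]
  ring_nf

lemma eLpNorm_heatKernel (y : Euc n) (p : ℝ≥0∞) :
    eLpNorm (fun x => heatKernel n t x y) p = eLpNorm (fun x => heatKernel n t x 0) p := by
  rw [← eLpNorm_comp_measurePreserving (g := fun x => heatKernel n t x 0)
    (by unfold heatKernel; fun_prop) (measurePreserving_sub_right volume y)]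
  simp [Function.comp_def, heatKernel]

variable {β : ℝ} {p : ℝ≥0∞}

lemma eLpNorm_norm_rpow_mul_heatKernel_one_le [NeZero n] (hβ : 0 ≤ β) (hp : 1 ≤ p)
    (hβp : β < n * (p⁻¹).toReal) :
    ∃ C : ℝ≥0, ∀ y : Euc n, eLpNorm (fun x : Euc n => ‖x‖ ^ (-β) * heatKernel n 1 x y) p ≤ C := by
  have hp_zero : p ≠ 0 := (zero_lt_one.trans_le hp).ne'
  have hp_top : p ≠ ⊤ := by
    rintro rfl
    simp only [inv_top, toReal_zero, mul_zero] at hβp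
    exact hβp.not_ge hβ
  set W : Euc n → ℝ := (Metric.ball 0 1).indicator fun x => ‖x‖ ^ (-β) with hW_def
  have hW : MemLp W p := by
    rw [memLp_indicator_iff_restrict measurableSet_ball,
      ← integrable_norm_rpow_iff (Measurable.aestronglyMeasurable (by fun_prop)) hp_zero hp_top]
    have hexp : -(Module.finrank ℝ (Euc n) : ℝ) < -β * p.toReal := by
      have hp_pos : 0 < p.toReal := ENNReal.toReal_pos hp_zero hp_top
      rw [toReal_inv, ← div_eq_mul_inv, lt_div_iff₀ hp_pos] at hβp
      simpa using hβp
    refine (integrableOn_ball_norm_rpow volume hexp 1).congr (.of_forall fun x => ?_)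
    simp only [Real.norm_of_nonneg (Real.rpow_nonneg (norm_nonneg x) (-β)),
      Real.rpow_mul (norm_nonneg x)]
  have hG := memLp_heatKernel (n := n) one_pos 0 hp_zero hp_top
  refine ⟨(eLpNorm W p + eLpNorm (fun x : Euc n => heatKernel n 1 x 0) p).toNNReal, fun y => ?_⟩
  rw [ENNReal.coe_toNNReal (ENNReal.add_ne_top.2 ⟨hW.2.ne, hG.2.ne⟩), ← eLpNorm_heatKernel y]
  refine (eLpNorm_mono_real fun x => ?_).trans (eLpNorm_add_le hW.1
    (memLp_heatKernel one_pos y hp_zero hp_top).1 hp)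
  have hk := heatKernel_nonneg zero_le_one x y
  rw [Real.norm_of_nonneg (by positivity), Pi.add_apply, hW_def]
  by_cases hx : x ∈ Metric.ball 0 1
  · rw [indicator_of_mem hx]
    exact (mul_le_of_le_one_right (by positivity) (heatKernel_one_le x y)).trans
      (le_add_of_nonneg_right hk)
  · rw [indicator_of_notMem hx, zero_add]
    rw [mem_ball_zero_iff, not_lt] at hx
    exact mul_le_of_le_one_left hk (Real.rpow_le_one_of_one_le_of_nonpos hx (neg_nonpos.2 hβ))

lemma eLpNorm_norm_rpow_mul_heatKernel (ht : 0 < t) (y : Euc n) :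
    eLpNorm (fun x : Euc n => ‖x‖ ^ (-β) * heatKernel n t x y) p =
      ENNReal.ofReal (t ^ ((n * (p⁻¹).toReal - n - β) / 2)) *
        eLpNorm (fun x : Euc n => ‖x‖ ^ (-β) * heatKernel n 1 x ((√t)⁻¹ • y)) p := by
  have hR : 0 < (√t)⁻¹ := inv_pos.2 (Real.sqrt_pos.2 ht)
  have hRt (a : ℝ) : (√t)⁻¹ ^ (-a) = t ^ (a / 2) := by
    rw [Real.inv_rpow (Real.sqrt_nonneg t), Real.rpow_neg (Real.sqrt_nonneg t), inv_inv,
      Real.sqrt_eq_rpow, ← Real.rpow_mul ht.le, one_div_mul_eq_div]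
  have hscale (x : Euc n) : ‖x‖ ^ (-β) * heatKernel n t x y = t ^ ((-n - β) / 2) *
      (‖(√t)⁻¹ • x‖ ^ (-β) * heatKernel n 1 ((√t)⁻¹ • x) ((√t)⁻¹ • y)) := by
    have hexp : (-n / 2 : ℝ) = (-n - β) / 2 + β / 2 := by ring
    rw [heatKernel_eq_smul ht, norm_smul, Real.norm_of_nonneg hR.le,
      Real.mul_rpow hR.le (norm_nonneg x), hRt, hexp, Real.rpow_add ht]
    ring
  have hpow : t ^ ((-n - β) / 2) * (√t)⁻¹ ^ (-(n * (p⁻¹).toReal)) =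
      t ^ ((n * (p⁻¹).toReal - n - β) / 2) := by
    rw [hRt, ← Real.rpow_add ht]
    ring_nf
  simp_rw [hscale]
  rw [← hpow, ENNReal.ofReal_mul (by positivity), mul_assoc]
  have hcomp := eLpNorm_comp_smul volume
    (fun x : Euc n => ‖x‖ ^ (-β) * heatKernel n 1 x ((√t)⁻¹ • y)) p hR
  rw [finrank_euclideanSpace_fin] at hcomp
  rw [← hcomp, ← Real.enorm_eq_ofReal (by positivity), ← eLpNorm_const_smul]
  rfl

lemma eLpNorm_norm_rpow_mul_heatKernel_le [NeZero n] (hβ : 0 ≤ β) (hp : 1 ≤ p)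
    (hβp : β < n * (p⁻¹).toReal) :
    ∃ C : ℝ≥0, ∀ t : ℝ, 0 < t → ∀ y : Euc n,
      eLpNorm (fun x : Euc n => ‖x‖ ^ (-β) * heatKernel n t x y) p ≤
        C * ENNReal.ofReal (t ^ ((n * (p⁻¹).toReal - n - β) / 2)) := by
  obtain ⟨C, hC⟩ := eLpNorm_norm_rpow_mul_heatKernel_one_le hβ hp hβp
  refine ⟨C, fun t ht y => ?_⟩
  rw [eLpNorm_norm_rpow_mul_heatKernel ht, mul_comm]
  gcongr
  exact hC _

end HeatKernel

section WeightedPow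

/-- The weighted power `|x|^γ |f(x)|^a`; for `a = α` it is the size of the Hardy–Hénon
nonlinearity, for `a = α - 1` that of the potential multiplying a difference of solutions.
It takes values in `ℝ≥0∞` so that its integrals need no integrability hypotheses. -/
def weightedPow (n : ℕ) (γ a : ℝ) (f : Euc n → ℝ) (x : Euc n) : ℝ≥0∞ :=
  ENNReal.ofReal (‖x‖ ^ γ) * ‖f x‖ₑ ^ a

variable {n : ℕ} {γ a : ℝ}

lemma measurable_weightedPow_uncurry {ι : Type*} [MeasurableSpace ι] {u : ι → Euc n → ℝ}
    (hu : Measurable (Function.uncurry u)) :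
    Measurable (Function.uncurry fun i => weightedPow n γ a (u i)) := by
  have hu' : Measurable fun z : ι × Euc n => u z.1 z.2 := hu
  unfold Function.uncurry weightedPow
  fun_prop

variable {s : ℝ} {q : ℝ≥0∞}

lemma weightedPow_mul_ofReal_eq_enorm (ha : 0 ≤ a) {x : Euc n} (hx : x ≠ 0)
    (f : Euc n → ℝ) {k : ℝ} (hk : 0 ≤ k) :
    weightedPow n γ a f x * ENNReal.ofReal k =
      ‖‖‖x‖ ^ s * f x‖ ^ a * (‖x‖ ^ (-(a * s - γ)) * k)‖ₑ := by
  have hx' : 0 < ‖x‖ := norm_pos_iff.2 hx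
  have hweight : ‖x‖ ^ γ = (‖x‖ ^ s) ^ a * ‖x‖ ^ (-(a * s - γ)) := by
    rw [← Real.rpow_mul hx'.le, ← Real.rpow_add hx']
    ring_nf
  have hpow : ‖‖x‖ ^ s * f x‖ ^ a = (‖x‖ ^ s) ^ a * ‖f x‖ ^ a := by
    rw [norm_mul, Real.norm_of_nonneg (by positivity),
      Real.mul_rpow (by positivity) (norm_nonneg _)]
  rw [weightedPow, ← ofReal_norm, ENNReal.ofReal_rpow_of_nonneg (norm_nonneg _) ha,
    ← ENNReal.ofReal_mul (by positivity), ← ENNReal.ofReal_mul (by positivity), hpow, hweight,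
    Real.enorm_of_nonneg (by positivity)]
  ring_nf

lemma lintegral_enorm_mul_le_eLpNorm_mul_eLpNorm {X : Type*} [MeasurableSpace X] {μ : Measure X}
    {p q : ℝ≥0∞} [ENNReal.HolderTriple p q 1] {f g : X → ℝ} (hf : AEStronglyMeasurable f μ)
    (hg : AEStronglyMeasurable g μ) :
    ∫⁻ x, ‖f x * g x‖ₑ ∂μ ≤ eLpNorm f p μ * eLpNorm g q μ := by
  rw [← eLpNorm_one_eq_lintegral_enorm]
  exact eLpNorm_smul_le_mul_eLpNorm (φ := f) (p := p) (q := q) (r := 1) hg hf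

lemma holderTriple_div_ofReal (ha : 0 < a) (hq : q ≠ 0) (haq : a * (q⁻¹).toReal ≤ 1) :
    ENNReal.HolderTriple (q / ENNReal.ofReal a) (ENNReal.ofReal (1 - a * (q⁻¹).toReal))⁻¹ 1 := by
  constructor
  have hdiv : (q / ENNReal.ofReal a)⁻¹ = ENNReal.ofReal (a * (q⁻¹).toReal) := by
    rw [ENNReal.inv_div (.inl ENNReal.ofReal_ne_top) (.inl (by simpa using ha)), div_eq_mul_inv,
      ENNReal.ofReal_mul ha.le, ENNReal.ofReal_toReal (by simpa using hq)]
  rw [hdiv, inv_inv, ← ENNReal.ofReal_add (by positivity) (sub_nonneg.2 haq)]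
  simp

lemma lintegral_weightedPow_mul_heatKernel_le [NeZero n] (ha : 0 < a) (hq : q ≠ 0)
    (hγs : γ ≤ a * s) (has : a * (s + n * (q⁻¹).toReal) < n + γ) :
    ∃ C : ℝ≥0, ∀ f : Euc n → ℝ, Measurable f → ∀ t : ℝ, 0 < t → ∀ y : Euc n,
      ∫⁻ x, weightedPow n γ a f x * ENNReal.ofReal (heatKernel n t x y) ≤
        C * ENNReal.ofReal (t ^ (-((a * (s + n * (q⁻¹).toReal) - γ) / 2))) *
          eLpNorm (fun x : Euc n => ‖x‖ ^ s * f x) q ^ a := by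
  set κ := (q⁻¹).toReal
  have hκ_nonneg : 0 ≤ κ := ENNReal.toReal_nonneg
  have hn : (0 : ℝ) < n := Nat.cast_pos.2 (NeZero.pos n)
  have hakn : n * (a * κ) < n * 1 := by linarith
  have hak : a * κ < 1 := lt_of_mul_lt_mul_left hakn hn.le
  set p := (ENNReal.ofReal (1 - a * κ))⁻¹ with hp
  have hp_toReal : (p⁻¹).toReal = 1 - a * κ := by
    rw [hp, inv_inv, ENNReal.toReal_ofReal (sub_pos.2 hak).le]
  have hp_one : 1 ≤ p := by
    rw [hp, ENNReal.one_le_inv, ENNReal.ofReal_le_one]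
    nlinarith
  have hqa : q / ENNReal.ofReal a * ENNReal.ofReal a = q :=
    ENNReal.div_mul_cancel (by simpa using ha) ENNReal.ofReal_ne_top
  have : ENNReal.HolderTriple (q / ENNReal.ofReal a) p 1 := holderTriple_div_ofReal ha hq hak.le
  obtain ⟨C, hC⟩ := eLpNorm_norm_rpow_mul_heatKernel_le (sub_nonneg.2 hγs) hp_one
    (by rw [hp_toReal]; linarith)
  refine ⟨C, fun f hf t ht y => ?_⟩
  have hexp : (n * (p⁻¹).toReal - n - (a * s - γ)) / 2 = -((a * (s + n * κ) - γ) / 2) := by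
    rw [hp_toReal]
    ring
  have factor : ∫⁻ x, weightedPow n γ a f x * ENNReal.ofReal (heatKernel n t x y) =
      ∫⁻ x, ‖‖‖x‖ ^ s * f x‖ ^ a * (‖x‖ ^ (-(a * s - γ)) * heatKernel n t x y)‖ₑ := by
    refine lintegral_congr_ae ?_
    filter_upwards [Measure.ae_ne volume (0 : Euc n)] with x hx
    exact weightedPow_mul_ofReal_eq_enorm ha.le hx f (heatKernel_nonneg ht.le x y)
  have hölder : ∫⁻ x, ‖‖‖x‖ ^ s * f x‖ ^ a * (‖x‖ ^ (-(a * s - γ)) * heatKernel n t x y)‖ₑ ≤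
      eLpNorm (fun x : Euc n => ‖‖x‖ ^ s * f x‖ ^ a) (q / ENNReal.ofReal a) *
        eLpNorm (fun x : Euc n => ‖x‖ ^ (-(a * s - γ)) * heatKernel n t x y) p :=
    lintegral_enorm_mul_le_eLpNorm_mul_eLpNorm
      (Measurable.aestronglyMeasurable (by fun_prop))
      (Measurable.aestronglyMeasurable (by unfold heatKernel; fun_prop))
  rw [eLpNorm_norm_rpow _ ha, hqa] at hölder
  rw [factor, ← hexp, mul_comm (_ * ENNReal.ofReal _)]
  exact hölder.trans (mul_le_mul_right (hC t ht y) _)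

end WeightedPow

section Annuli

variable {n : ℕ}

lemma measurableSet_annulus (j : ℤ) : MeasurableSet (annulus n j) :=
  measurable_norm measurableSet_Ico

lemma pairwise_disjoint_annulus : Pairwise (Function.onFun Disjoint (annulus n)) := by
  have hmono : Monotone fun j : ℤ => (2 : ℝ) ^ j := fun i j hij =>
    zpow_le_zpow_right₀ one_le_two hij
  intro i j hij
  exact (hmono.pairwise_disjoint_on_Ico_pred hij).preimage norm

lemma ae_exists_mem_annulus [NeZero n] : ∀ᵐ x : Euc n, ∃ j, x ∈ annulus n j := by
  filter_upwards [Measure.ae_ne volume (0 : Euc n)] with x hx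
  obtain ⟨k, hk⟩ := exists_mem_Ico_zpow (norm_pos_iff.2 hx) (one_lt_two (α := ℝ))
  exact ⟨k + 1, by simpa using hk.1, hk.2⟩

lemma norm_rpow_le_of_mem_annulus {j : ℤ} {x : Euc n} (hx : x ∈ annulus n j) (s : ℝ) :
    ‖x‖ ^ s ≤ 2 ^ |s| * (2 : ℝ) ^ ((j : ℝ) * s) := by
  have hlower : (2 : ℝ) ^ ((j : ℝ) - 1) ≤ ‖x‖ := by
    exact_mod_cast hx.1
  have hupper : ‖x‖ ≤ (2 : ℝ) ^ (j : ℝ) := by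
    exact_mod_cast hx.2.le
  rw [← Real.rpow_add two_pos]
  rcases le_total 0 s with hs | hs
  · refine (Real.rpow_le_rpow (norm_nonneg x) hupper hs).trans ?_
    rw [← Real.rpow_mul zero_le_two]
    exact Real.rpow_le_rpow_of_exponent_le one_le_two (by linarith [abs_nonneg s])
  · refine (Real.rpow_le_rpow_of_nonpos (by positivity) hlower hs).trans_eq ?_
    rw [← Real.rpow_mul zero_le_two, abs_of_nonpos hs]
    ring_nf

lemma volume_annulus_le [NeZero n] (j : ℤ) :
    volume (annulus n j) ≤
      ENNReal.ofReal ((2 : ℝ) ^ ((j : ℝ) * n)) * volume (Metric.ball (0 : Euc n) 1) := by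
  have hball := Measure.addHaar_ball (volume : Measure (Euc n)) 0 (r := (2 : ℝ) ^ j)
    (by positivity)
  rw [finrank_euclideanSpace, Fintype.card_fin, ← Real.rpow_intCast,
    ← Real.rpow_mul_natCast zero_le_two, Real.rpow_intCast] at hball
  rw [← hball]
  exact measure_mono fun x hx => mem_ball_zero_iff.2 hx.2

end Annuli

section SequenceNorm

variable {ι : Type*} [MeasurableSpace ι] [MeasurableSingletonClass ι]

lemma eLpNorm_count_anti {f : ι → ℝ≥0∞} {p q : ℝ≥0∞} (hp : p ≠ 0) (hpq : p ≤ q) :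
    eLpNorm f q Measure.count ≤ eLpNorm f p Measure.count := by
  set N := eLpNorm f p Measure.count with hN
  have hfN : ∀ i, f i ≤ N := fun i => enorm_le_eLpNorm_count f i hp
  rcases eq_or_ne q ⊤ with rfl | hq
  · rw [eLpNorm_exponent_top, eLpNormEssSup_count]
    exact iSup_le hfN
  have hq_pos : 0 < q.toReal := ENNReal.toReal_pos (hp.bot_lt.trans_le hpq).ne' hq
  have hp_pos : 0 < p.toReal := ENNReal.toReal_pos hp (ne_top_of_le_ne_top hq hpq)
  have hpq' : 0 ≤ q.toReal - p.toReal := sub_nonneg.2 (ENNReal.toReal_mono hq hpq)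
  have hsum : ∑' i, f i ^ p.toReal = N ^ p.toReal := by
    rw [hN, eLpNorm_eq_lintegral_rpow_enorm_toReal hp (ne_top_of_le_ne_top hq hpq), lintegral_count,
      ← ENNReal.rpow_mul, one_div_mul_cancel hp_pos.ne', ENNReal.rpow_one]
    rfl
  rw [eLpNorm_eq_lintegral_rpow_enorm_toReal (hp.bot_lt.trans_le hpq).ne' hq, lintegral_count,
    one_div, ENNReal.rpow_inv_le_iff hq_pos]
  calc ∑' i, f i ^ q.toReal = ∑' i, f i ^ p.toReal * f i ^ (q.toReal - p.toReal) := by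
        simp_rw [← ENNReal.rpow_add_of_nonneg _ _ hp_pos.le hpq', add_sub_cancel]
    _ ≤ ∑' i, f i ^ p.toReal * N ^ (q.toReal - p.toReal) := by
        gcongr with i
        exact hfN i
    _ = N ^ q.toReal := by
        rw [ENNReal.tsum_mul_right, hsum, ← ENNReal.rpow_add_of_nonneg _ _ hp_pos.le hpq',
          add_sub_cancel]

lemma eLpNorm_eq_eLpNorm_count_indicator [Countable ι] {X E : Type*} [MeasurableSpace X]
    {μ : Measure X} [NormedAddCommGroup E] {A : ι → Set X} (hA : ∀ i, MeasurableSet (A i))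
    (hdisj : Pairwise (Function.onFun Disjoint A)) (hcover : ∀ᵐ x ∂μ, ∃ i, x ∈ A i)
    (f : X → E) (q : ℝ≥0∞) :
    eLpNorm f q μ = eLpNorm (fun i => eLpNorm ((A i).indicator f) q μ) q Measure.count := by
  rcases eq_or_ne q 0 with rfl | hq₀
  · simp
  rcases eq_or_ne q ⊤ with rfl | hq
  · rw [eLpNorm_exponent_top, eLpNorm_exponent_top, eLpNormEssSup_count]
    refine le_antisymm ?_ (iSup_le fun i => eLpNorm_indicator_le f)
    have hblock : ∀ᵐ x ∂μ, ∀ i, ‖(A i).indicator f x‖ₑ ≤ eLpNormEssSup ((A i).indicator f) μ :=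
      ae_all_iff.2 fun i => ae_le_eLpNormEssSup
    refine essSup_le_of_ae_le _ ?_
    filter_upwards [hblock, hcover] with x hx ⟨i, hi⟩
    refine le_iSup_of_le i ?_
    simpa only [indicator_of_mem hi, enorm_eq_self, eLpNorm_exponent_top] using hx i
  · have hq_pos : 0 < q.toReal := ENNReal.toReal_pos hq₀ hq
    have hblock : ∀ i, eLpNorm ((A i).indicator f) q μ ^ q.toReal =
        ∫⁻ x in A i, ‖f x‖ₑ ^ q.toReal ∂μ := fun i => by
      rw [eLpNorm_indicator_eq_eLpNorm_restrict (hA i),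
        eLpNorm_eq_lintegral_rpow_enorm_toReal hq₀ hq, ← ENNReal.rpow_mul,
        one_div_mul_cancel hq_pos.ne', ENNReal.rpow_one]
    have hunion : (⋃ i, A i) =ᵐ[μ] univ := by
      rw [eventuallyEq_univ]
      filter_upwards [hcover] with x hx using mem_iUnion.2 hx
    rw [eLpNorm_eq_lintegral_rpow_enorm_toReal hq₀ hq,
      eLpNorm_eq_lintegral_rpow_enorm_toReal hq₀ hq, lintegral_count]
    simp only [enorm_eq_self, hblock]
    rw [← lintegral_iUnion hA hdisj, setLIntegral_congr hunion, setLIntegral_univ]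

end SequenceNorm

section Herz

/-- The term `2^{js} ‖f χ_{A_j}‖_{L^q}` of the Herz quasi-norm, so that this quasi-norm is the
`ℓ^r` norm of the sequence of blocks. -/
def herzBlock (n : ℕ) (s : ℝ) (q : ℝ≥0∞) (f : Euc n → ℝ) (j : ℤ) : ℝ≥0∞ :=
  ENNReal.ofReal ((2 : ℝ) ^ ((j : ℝ) * s)) * eLpNorm ((annulus n j).indicator f) q volume

variable {n : ℕ} {s : ℝ} {p q r : ℝ≥0∞} {f : Euc n → ℝ}

lemma herzNorm_eq_eLpNorm_count (hr : r ≠ 0) :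
    herzNorm n s q r f = eLpNorm (herzBlock n s q f) r Measure.count := by
  rcases eq_or_ne r ⊤ with rfl | hr'
  · rw [herzNorm, if_pos rfl, eLpNorm_exponent_top, eLpNormEssSup_count]
    rfl
  · rw [herzNorm, if_neg hr', eLpNorm_eq_lintegral_rpow_enorm_toReal hr hr', lintegral_count]
    rfl

lemma herzNorm_anti_right {r' : ℝ≥0∞} (hr : r ≠ 0) (hrr' : r ≤ r') :
    herzNorm n s q r' f ≤ herzNorm n s q r f := by
  rw [herzNorm_eq_eLpNorm_count hr, herzNorm_eq_eLpNorm_count (hr.bot_lt.trans_le hrr').ne']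
  exact eLpNorm_count_anti hr hrr'

lemma eLpNorm_indicator_annulus_norm_rpow_mul_le (j : ℤ) :
    eLpNorm ((annulus n j).indicator fun x => ‖x‖ ^ s * f x) q volume ≤
      ENNReal.ofReal (2 ^ |s|) * herzBlock n s q f j := by
  rw [herzBlock, ← mul_assoc, ← ENNReal.ofReal_mul (by positivity)]
  refine eLpNorm_le_mul_eLpNorm_of_ae_le_mul' (.of_forall fun x => ?_) q
  by_cases hx : x ∈ annulus n j
  · rw [indicator_of_mem hx, indicator_of_mem hx, enorm_mul, Real.enorm_of_nonneg (by positivity)]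
    gcongr
    exact ENNReal.ofReal_le_ofReal (norm_rpow_le_of_mem_annulus hx s)
  · simp [hx]

lemma eLpNorm_norm_rpow_mul_le_herzNorm [NeZero n] (hr : r ≠ 0) (hrq : r ≤ q) :
    eLpNorm (fun x : Euc n => ‖x‖ ^ s * f x) q volume ≤
      ENNReal.ofReal (2 ^ |s|) * herzNorm n s q r f := by
  have hblock : eLpNorm (fun x : Euc n => ‖x‖ ^ s * f x) q volume ≤
      ENNReal.ofReal (2 ^ |s|) * herzNorm n s q q f := by
    rw [eLpNorm_eq_eLpNorm_count_indicator measurableSet_annulus pairwise_disjoint_annulus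
      ae_exists_mem_annulus, herzNorm_eq_eLpNorm_count (hr.bot_lt.trans_le hrq).ne']
    exact eLpNorm_le_mul_eLpNorm_of_ae_le_mul'
      (.of_forall eLpNorm_indicator_annulus_norm_rpow_mul_le) q
  exact hblock.trans (by gcongr; exact herzNorm_anti_right hr hrq)

lemma herzBlock_le_mul_herzBlock [NeZero n] {s' : ℝ} (hp : p ≠ 0) (hpq : p ≤ q)
    (hs : s' + n * (p⁻¹).toReal = s + n * (q⁻¹).toReal) (hf : Measurable f) (j : ℤ) :
    herzBlock n s' p f j ≤
      volume (Metric.ball (0 : Euc n) 1) ^ ((p⁻¹).toReal - (q⁻¹).toReal) *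
        herzBlock n s q f j := by
  set d := (p⁻¹).toReal - (q⁻¹).toReal with hd
  have hd_nonneg : 0 ≤ d := sub_nonneg.2
    (ENNReal.toReal_mono (ENNReal.inv_ne_top.2 hp) (ENNReal.inv_le_inv.2 hpq))
  have hölder : eLpNorm ((annulus n j).indicator f) p volume ≤
      eLpNorm ((annulus n j).indicator f) q volume * volume (annulus n j) ^ d := by
    rw [eLpNorm_indicator_eq_eLpNorm_restrict (measurableSet_annulus j),
      eLpNorm_indicator_eq_eLpNorm_restrict (measurableSet_annulus j)]
    have := eLpNorm_le_eLpNorm_mul_rpow_measure_univ (μ := volume.restrict (annulus n j))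
      hpq hf.aestronglyMeasurable
    rwa [Measure.restrict_apply_univ, one_div, one_div, ← ENNReal.toReal_inv,
      ← ENNReal.toReal_inv] at this
  have hexp : (2 : ℝ) ^ ((j : ℝ) * s') * ((2 : ℝ) ^ ((j : ℝ) * n)) ^ d =
      (2 : ℝ) ^ ((j : ℝ) * s) := by
    rw [← Real.rpow_mul zero_le_two, ← Real.rpow_add two_pos, eq_sub_of_add_eq hs, hd]
    ring_nf
  calc herzBlock n s' p f j
      ≤ ENNReal.ofReal ((2 : ℝ) ^ ((j : ℝ) * s')) *
          (eLpNorm ((annulus n j).indicator f) q volume *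
            (ENNReal.ofReal ((2 : ℝ) ^ ((j : ℝ) * n)) *
              volume (Metric.ball (0 : Euc n) 1)) ^ d) := by
        rw [herzBlock]
        gcongr
        exact hölder.trans (by gcongr; exact volume_annulus_le j)
    _ = volume (Metric.ball (0 : Euc n) 1) ^ d * herzBlock n s q f j := by
        rw [herzBlock, ← hexp, ENNReal.mul_rpow_of_nonneg _ _ hd_nonneg,
          ENNReal.ofReal_rpow_of_nonneg (by positivity) hd_nonneg,
          ENNReal.ofReal_mul (by positivity)]
        ring

lemma exists_herzNorm_le_mul_herzNorm [NeZero n] {s' : ℝ} (hp : p ≠ 0) (hpq : p ≤ q) (hr : r ≠ 0)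
    (hs : s' + n * (p⁻¹).toReal = s + n * (q⁻¹).toReal) :
    ∃ C : ℝ≥0, ∀ f : Euc n → ℝ, Measurable f →
      herzNorm n s' p r f ≤ C * herzNorm n s q r f := by
  have hd_nonneg : 0 ≤ (p⁻¹).toReal - (q⁻¹).toReal := sub_nonneg.2
    (ENNReal.toReal_mono (ENNReal.inv_ne_top.2 hp) (ENNReal.inv_le_inv.2 hpq))
  lift volume (Metric.ball (0 : Euc n) 1) ^ ((p⁻¹).toReal - (q⁻¹).toReal) to ℝ≥0
    using ENNReal.rpow_ne_top_of_nonneg hd_nonneg measure_ball_lt_top.ne with C hC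
  refine ⟨C, fun f hf => ?_⟩
  rw [herzNorm_eq_eLpNorm_count hr, herzNorm_eq_eLpNorm_count hr]
  refine eLpNorm_le_mul_eLpNorm_of_ae_le_mul' (.of_forall fun j => ?_) r
  rw [hC]
  exact herzBlock_le_mul_herzBlock hp hpq hs hf j

lemma lintegral_weightedPow_eq_eLpNorm_rpow {γ a : ℝ} (ha : 0 < a) :
    ∫⁻ x, weightedPow n γ a f x =
      eLpNorm (fun x : Euc n => ‖x‖ ^ (γ / a) * f x) (ENNReal.ofReal a) volume ^ a := by
  rw [eLpNorm_eq_lintegral_rpow_enorm_toReal (by simpa using ha) ENNReal.ofReal_ne_top,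
    ENNReal.toReal_ofReal ha.le, ← ENNReal.rpow_mul, one_div_mul_cancel ha.ne', ENNReal.rpow_one]
  refine lintegral_congr fun x => ?_
  rw [weightedPow, enorm_mul, ENNReal.mul_rpow_of_nonneg _ _ ha.le,
    Real.enorm_of_nonneg (r := ‖x‖ ^ (γ / a)) (by positivity),
    ENNReal.ofReal_rpow_of_nonneg (by positivity) ha.le,
    ← Real.rpow_mul (norm_nonneg x), div_mul_cancel₀ _ ha.ne']

lemma exists_lintegral_weightedPow_le_herzNorm [NeZero n] {γ a : ℝ} (ha : 0 < a) (hr : r ≠ 0)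
    (hra : r ≤ ENNReal.ofReal a) (haq : ENNReal.ofReal a ≤ q)
    (hs : s + n * (q⁻¹).toReal = (n + γ) / a) :
    ∃ C : ℝ≥0, ∀ f : Euc n → ℝ, Measurable f →
      ∫⁻ x, weightedPow n γ a f x ≤ C * herzNorm n s q r f ^ a := by
  have ha' : ENNReal.ofReal a ≠ 0 := by simpa using ha
  have hscale : γ / a + n * ((ENNReal.ofReal a)⁻¹).toReal = s + n * (q⁻¹).toReal := by
    rw [hs, ENNReal.toReal_inv, ENNReal.toReal_ofReal ha.le]
    ring
  obtain ⟨C, hC⟩ := exists_herzNorm_le_mul_herzNorm ha' haq hr hscale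
  refine ⟨(Real.toNNReal (2 ^ |γ / a|) * C) ^ a, fun f hf => ?_⟩
  rw [lintegral_weightedPow_eq_eLpNorm_rpow ha, ENNReal.coe_rpow_of_nonneg _ ha.le,
    ← ENNReal.mul_rpow_of_nonneg _ _ ha.le, ENNReal.coe_mul, mul_assoc]
  gcongr
  exact (eLpNorm_norm_rpow_mul_le_herzNorm hr hra).trans (by gcongr; exacts [le_rfl, hC f hf])

end Herz

section Gap

variable {n : ℕ} {γ α : ℝ}

/-- The density `|x|^γ (|v|^{α-1} + |w|^{α-1}) |v - w|` which dominates, up to the factor `α`, the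
difference of the Hardy–Hénon nonlinearities at `v` and `w`. -/
def nonlinGap (n : ℕ) (γ α : ℝ) (v w : Euc n → ℝ) (x : Euc n) : ℝ≥0∞ :=
  (weightedPow n γ (α - 1) v x + weightedPow n γ (α - 1) w x) * ‖v x - w x‖ₑ

lemma measurable_nonlinGap_uncurry {ι : Type*} [MeasurableSpace ι] {u₁ u₂ : ι → Euc n → ℝ}
    (hu₁ : Measurable (Function.uncurry u₁)) (hu₂ : Measurable (Function.uncurry u₂)) :
    Measurable (Function.uncurry fun i => nonlinGap n γ α (u₁ i) (u₂ i)) :=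
  ((measurable_weightedPow_uncurry hu₁).add (measurable_weightedPow_uncurry hu₂)).mul
    (hu₁.sub hu₂).enorm

lemma enorm_nonlin_sub_nonlin_le (hα : 1 ≤ α) (v w : Euc n → ℝ) (x : Euc n) :
    ‖nonlin n γ α v x - nonlin n γ α w x‖ₑ ≤ ENNReal.ofReal α * nonlinGap n γ α v w x := by
  have hα' : 0 ≤ α - 1 := sub_nonneg.2 hα
  have hfactor : nonlin n γ α v x - nonlin n γ α w x =
      ‖x‖ ^ γ * (|v x| ^ (α - 1) * v x - |w x| ^ (α - 1) * w x) := by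
    unfold nonlin
    ring
  have hgap : ENNReal.ofReal α * nonlinGap n γ α v w x = ENNReal.ofReal
      (‖x‖ ^ γ * (α * ((|v x| ^ (α - 1) + |w x| ^ (α - 1)) * |v x - w x|))) := by
    simp only [nonlinGap, weightedPow, Real.enorm_eq_ofReal_abs,
      ENNReal.ofReal_rpow_of_nonneg (abs_nonneg _) hα']
    rw [← mul_add, ← ENNReal.ofReal_add (by positivity) (by positivity),
      ← ENNReal.ofReal_mul (by positivity), ← ENNReal.ofReal_mul (by positivity),
      ← ENNReal.ofReal_mul (by positivity)]
    ring_nf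
  rw [hfactor, hgap, Real.enorm_eq_ofReal_abs, abs_mul, abs_of_nonneg (by positivity)]
  gcongr
  exact abs_rpow_mul_self_sub_le hα (v x) (w x)

lemma rpow_sub_one_add_mul_add_le {a b : ℝ≥0∞} (hα : 1 ≤ α) :
    (a ^ (α - 1) + b ^ (α - 1)) * (a + b) ≤ 4 * (a ^ α + b ^ α) := by
  wlog hba : b ≤ a generalizing a b
  · simpa only [add_comm] using this (le_of_not_ge hba)
  have hα' : 0 ≤ α - 1 := sub_nonneg.2 hα
  have hpow : a ^ (α - 1) * a = a ^ α := by
    conv_lhs => rw [← ENNReal.rpow_one a, ← ENNReal.rpow_mul, one_mul]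
    rw [← ENNReal.rpow_add_of_nonneg _ _ hα' zero_le_one, sub_add_cancel]
  calc (a ^ (α - 1) + b ^ (α - 1)) * (a + b)
      ≤ (a ^ (α - 1) + a ^ (α - 1)) * (a + a) := by gcongr
    _ = 4 * a ^ α := by rw [← hpow]; ring
    _ ≤ 4 * (a ^ α + b ^ α) := by gcongr; exact le_self_add

lemma nonlinGap_le (hα : 1 ≤ α) (v w : Euc n → ℝ) (x : Euc n) :
    nonlinGap n γ α v w x ≤ 4 * (weightedPow n γ α v x + weightedPow n γ α w x) := by
  simp only [nonlinGap, weightedPow]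
  rw [← mul_add, ← mul_add, mul_assoc, mul_left_comm 4]
  refine mul_le_mul_right ?_ _
  exact (mul_le_mul_right (enorm_sub_le (a := v x) (b := w x)) _).trans
    (rpow_sub_one_add_mul_add_le hα)

lemma eq_of_nonlinGap_eq_zero (hα : 1 < α) {v w : Euc n → ℝ} {x : Euc n} (hx : x ≠ 0)
    (hgap : nonlinGap n γ α v w x = 0) : v x = w x := by
  have hweight : ENNReal.ofReal (‖x‖ ^ γ) ≠ 0 := by
    simpa using Real.rpow_pos_of_pos (norm_pos_iff.2 hx) γ
  have hα' : 0 < α - 1 := sub_pos.2 hα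
  rcases mul_eq_zero.1 hgap with hpow | hdiff
  · simp only [weightedPow, add_eq_zero, mul_eq_zero, hweight, false_or,
      ENNReal.rpow_eq_zero_iff_of_pos hα', enorm_eq_zero] at hpow
    rw [hpow.1, hpow.2]
  · exact sub_eq_zero.1 (enorm_eq_zero.1 hdiff)

end Gap

section Uniqueness

variable {n : ℕ} {γ α δ T : ℝ} {u₀ : Euc n → ℝ} {u₁ u₂ : ℝ → Euc n → ℝ}

/-- The bound `sup_y ∫ V(x) K_σ(x - y) dx ≤ C σ^{-δ}`, i.e. the decay `‖e^{σΔ}V‖_∞ ≤ C σ^{-δ}` of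
the heat evolution of a potential `V ≥ 0`. -/
def HeatDecay (n : ℕ) (δ : ℝ) (C : ℝ≥0) (V : Euc n → ℝ≥0∞) : Prop :=
  ∀ σ : ℝ, 0 < σ → ∀ y : Euc n,
    ∫⁻ x, V x * ENNReal.ofReal (heatKernel n σ x y) ≤ C * ENNReal.ofReal (σ ^ (-δ))

lemma HeatDecay.add {C D : ℝ≥0} {V W : Euc n → ℝ≥0∞} (hV : HeatDecay n δ C V)
    (hW : HeatDecay n δ D W) (hVm : Measurable V) :
    HeatDecay n δ (C + D) fun x => V x + W x := by
  intro σ hσ y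
  have hkernel : Measurable fun x : Euc n => ENNReal.ofReal (heatKernel n σ x y) := by
    unfold heatKernel
    fun_prop
  have hVkernel : Measurable fun x : Euc n => V x * ENNReal.ofReal (heatKernel n σ x y) :=
    hVm.mul hkernel
  simp only [add_mul, ENNReal.coe_add]
  rw [lintegral_add_left hVkernel]
  exact add_le_add (hV σ hσ y) (hW σ hσ y)

lemma ae_fst_mem_Ioo {X : Type*} [MeasurableSpace X] {μ : Measure X} (a b : ℝ) :
    ∀ᵐ z : ℝ × X ∂((volume.restrict (Ioo a b)).prod μ), z.1 ∈ Ioo a b :=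
  Measure.quasiMeasurePreserving_fst.ae (ae_restrict_mem measurableSet_Ioo)

lemma enorm_sub_le_lintegral_nonlinGap (hα : 1 ≤ α) (h₁ : IsMildSolution n γ α T u₀ u₁)
    (h₂ : IsMildSolution n γ α T u₀ u₂) :
    ∀ᵐ p : ℝ × Euc n ∂((volume.restrict (Ioo 0 T)).prod volume),
      ‖u₁ p.1 p.2 - u₂ p.1 p.2‖ₑ ≤
        ∫⁻ z : ℝ × Euc n, ENNReal.ofReal (heatKernel n (p.1 - z.1) p.2 z.2) *
          (ENNReal.ofReal α * nonlinGap n γ α (u₁ z.1) (u₂ z.1) z.2)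
          ∂((volume.restrict (Ioo 0 p.1)).prod volume) := by
  filter_upwards [h₁.2, h₂.2] with p ⟨_, hint₁, hduhamel₁⟩ ⟨_, hint₂, hduhamel₂⟩
  rw [hduhamel₁, hduhamel₂, add_sub_add_left_eq_sub, ← integral_sub hint₁ hint₂]
  refine (enorm_integral_le_lintegral_enorm _).trans (lintegral_mono_ae ?_)
  filter_upwards [ae_fst_mem_Ioo 0 p.1] with z hz
  rw [← mul_sub, enorm_mul, Real.enorm_of_nonneg (heatKernel_nonneg (sub_pos.2 hz.2).le _ _)]
  gcongr
  exact enorm_nonlin_sub_nonlin_le hα (u₁ z.1) (u₂ z.1) z.2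

lemma lintegral_mul_lintegral_le {X Z : Type*} [MeasurableSpace X] [MeasurableSpace Z]
    {μ : Measure X} [SFinite μ] {ν : Measure Z} [SFinite ν] {V : X → ℝ≥0∞} {K : X → Z → ℝ≥0∞}
    {G b : Z → ℝ≥0∞} (hV : Measurable V) (hK : Measurable (Function.uncurry K))
    (hG : Measurable G) (hb : ∀ᵐ z ∂ν, ∫⁻ x, V x * K x z ∂μ ≤ b z) :
    ∫⁻ x, V x * ∫⁻ z, K x z * G z ∂ν ∂μ ≤ ∫⁻ z, b z * G z ∂ν := by
  have hKl : ∀ x, Measurable (K x) := fun x => hK.comp measurable_prodMk_left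
  have hKr : ∀ z, Measurable fun x => K x z := fun z => hK.comp measurable_prodMk_right
  calc ∫⁻ x, V x * ∫⁻ z, K x z * G z ∂ν ∂μ
      = ∫⁻ x, ∫⁻ z, V x * K x z * G z ∂ν ∂μ := by
        refine lintegral_congr fun x => ?_
        have hKG : Measurable fun z => K x z * G z := (hKl x).mul hG
        simp only [mul_assoc]
        rw [lintegral_const_mul _ hKG]
    _ = ∫⁻ z, ∫⁻ x, V x * K x z * G z ∂μ ∂ν :=
        lintegral_lintegral_swap
          (((hV.comp measurable_fst).mul hK).mul (hG.comp measurable_snd)).aemeasurable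
    _ = ∫⁻ z, (∫⁻ x, V x * K x z ∂μ) * G z ∂ν :=
        lintegral_congr fun z => lintegral_mul_const _ (hV.mul (hKr z))
    _ ≤ ∫⁻ z, b z * G z ∂ν := by
        refine lintegral_mono_ae ?_
        filter_upwards [hb] with z hz
        gcongr

lemma HeatDecay.lintegral_mul_duhamel_le {C : ℝ≥0} {V : Euc n → ℝ≥0∞} (hV : HeatDecay n δ C V)
    (hVm : Measurable V) {G : ℝ × Euc n → ℝ≥0∞} (hG : Measurable G) (t : ℝ) :
    ∫⁻ x, V x * ∫⁻ z : ℝ × Euc n, ENNReal.ofReal (heatKernel n (t - z.1) x z.2) * G z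
        ∂((volume.restrict (Ioo 0 t)).prod volume) ≤
      ∫⁻ τ in Ioo 0 t, C * ENNReal.ofReal ((t - τ) ^ (-δ)) * ∫⁻ x, G (τ, x) := by
  have hkernel : Measurable (Function.uncurry fun (x : Euc n) (z : ℝ × Euc n) =>
      ENNReal.ofReal (heatKernel n (t - z.1) x z.2)) := by
    unfold Function.uncurry heatKernel
    fun_prop
  have hdecay : ∀ᵐ z : ℝ × Euc n ∂((volume.restrict (Ioo 0 t)).prod volume),
      ∫⁻ x, V x * ENNReal.ofReal (heatKernel n (t - z.1) x z.2) ≤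
        C * ENNReal.ofReal ((t - z.1) ^ (-δ)) := by
    filter_upwards [ae_fst_mem_Ioo 0 t] with z hz
    exact hV (t - z.1) (sub_pos.2 hz.2) z.2
  refine (lintegral_mul_lintegral_le hVm hkernel hG hdecay).trans_eq ?_
  rw [lintegral_prod _ (by fun_prop)]
  exact lintegral_congr fun τ =>
    lintegral_const_mul' (C * ENNReal.ofReal ((t - τ) ^ (-δ))) (fun x => G (τ, x)) (by finiteness)

lemma lintegral_nonlinGap_le_volterra (hu₁ : Measurable (Function.uncurry u₁))
    (hu₂ : Measurable (Function.uncurry u₂)) {t : ℝ} {C : ℝ≥0}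
    (hdecay : HeatDecay n δ C fun x =>
      weightedPow n γ (α - 1) (u₁ t) x + weightedPow n γ (α - 1) (u₂ t) x)
    (hduhamel : ∀ᵐ x : Euc n, ‖u₁ t x - u₂ t x‖ₑ ≤
      ∫⁻ z : ℝ × Euc n, ENNReal.ofReal (heatKernel n (t - z.1) x z.2) *
        (ENNReal.ofReal α * nonlinGap n γ α (u₁ z.1) (u₂ z.1) z.2)
        ∂((volume.restrict (Ioo 0 t)).prod volume)) :
    ∫⁻ x, nonlinGap n γ α (u₁ t) (u₂ t) x ≤
      ∫⁻ τ in Ioo 0 t, C * ENNReal.ofReal ((t - τ) ^ (-δ)) * ENNReal.ofReal α *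
        ∫⁻ x, nonlinGap n γ α (u₁ τ) (u₂ τ) x := by
  have hpotential : Measurable fun x =>
      weightedPow n γ (α - 1) (u₁ t) x + weightedPow n γ (α - 1) (u₂ t) x :=
    (measurable_weightedPow_uncurry hu₁).of_uncurry_left.add
      (measurable_weightedPow_uncurry hu₂).of_uncurry_left
  have hgap := measurable_nonlinGap_uncurry (γ := γ) (α := α) hu₁ hu₂
  refine (lintegral_mono_ae ?_).trans
    ((hdecay.lintegral_mul_duhamel_le hpotential (hgap.const_mul (ENNReal.ofReal α)) t).trans_eq ?_)
  · filter_upwards [hduhamel] with x hx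
    exact mul_le_mul_right hx _
  · refine lintegral_congr fun τ => ?_
    rw [mul_assoc _ (ENNReal.ofReal α), ← lintegral_const_mul _ hgap.of_uncurry_left]
    rfl

/-- The class of functions on `(0,T) × ℝⁿ` on which the uniqueness argument runs: the nonlinearity
is bounded in `L¹`, and the potential `|x|^γ |u|^{α-1}` has uniform heat decay of order `δ`. -/
structure HenonClass (n : ℕ) (γ α δ T : ℝ) (u : ℝ → Euc n → ℝ) : Prop where
  energy : ∃ M : ℝ≥0, ∀ᵐ t ∂volume.restrict (Ioo 0 T), ∫⁻ x, weightedPow n γ α (u t) x ≤ M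
  decay : ∃ C : ℝ≥0, ∀ᵐ t ∂volume.restrict (Ioo 0 T),
    HeatDecay n δ C (weightedPow n γ (α - 1) (u t))

lemma HenonClass.ae_lintegral_nonlinGap_le (hα : 1 ≤ α) (hu₁ : Measurable (Function.uncurry u₁))
    (hc₁ : HenonClass n γ α δ T u₁) (hc₂ : HenonClass n γ α δ T u₂) :
    ∃ M : ℝ≥0, ∀ᵐ t ∂volume.restrict (Ioo 0 T),
      ∫⁻ x, nonlinGap n γ α (u₁ t) (u₂ t) x ≤ M := by
  obtain ⟨M₁, hM₁⟩ := hc₁.energy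
  obtain ⟨M₂, hM₂⟩ := hc₂.energy
  refine ⟨4 * (M₁ + M₂), ?_⟩
  filter_upwards [hM₁, hM₂] with t ht₁ ht₂
  calc ∫⁻ x, nonlinGap n γ α (u₁ t) (u₂ t) x
      ≤ ∫⁻ x, 4 * (weightedPow n γ α (u₁ t) x + weightedPow n γ α (u₂ t) x) :=
        lintegral_mono (nonlinGap_le hα (u₁ t) (u₂ t))
    _ = 4 * ((∫⁻ x, weightedPow n γ α (u₁ t) x) + ∫⁻ x, weightedPow n γ α (u₂ t) x) := by
        rw [lintegral_const_mul' _ _ (by simp),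
          lintegral_add_left (measurable_weightedPow_uncurry hu₁).of_uncurry_left]
    _ ≤ ↑(4 * (M₁ + M₂)) := by
        push_cast
        gcongr

lemma setLIntegral_rpow_neg_ne_top (hδ : δ < 1) :
    ∫⁻ σ in Ioo 0 T, ENNReal.ofReal (σ ^ (-δ)) ≠ ⊤ := by
  have hint : IntegrableOn (fun σ : ℝ => σ ^ (-δ)) (uIoc 0 T) :=
    intervalIntegrable_iff.1 (intervalIntegral.intervalIntegrable_rpow' (by linarith))
  exact (hint.mono_set (Ioo_subset_Ioc_self.trans Ioc_subset_uIoc)).lintegral_lt_top.ne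

lemma ae_lintegral_nonlinGap_eq_zero (hα : 1 ≤ α) (hδ : δ < 1)
    (h₁ : IsMildSolution n γ α T u₀ u₁) (h₂ : IsMildSolution n γ α T u₀ u₂)
    (hc₁ : HenonClass n γ α δ T u₁) (hc₂ : HenonClass n γ α δ T u₂) :
    ∀ᵐ t ∂volume.restrict (Ioo 0 T), ∫⁻ x, nonlinGap n γ α (u₁ t) (u₂ t) x = 0 := by
  obtain ⟨M, hM⟩ := hc₁.ae_lintegral_nonlinGap_le hα h₁.1 hc₂
  obtain ⟨C₁, hC₁⟩ := hc₁.decay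
  obtain ⟨C₂, hC₂⟩ := hc₂.decay
  have hkernel : ∫⁻ σ in Ioo 0 T,
      ↑(C₁ + C₂) * ENNReal.ofReal (σ ^ (-δ)) * ENNReal.ofReal α ≠ ⊤ := by
    rw [lintegral_mul_const' _ _ ENNReal.ofReal_ne_top,
      lintegral_const_mul' _ _ ENNReal.coe_ne_top]
    finiteness [setLIntegral_rpow_neg_ne_top (T := T) hδ]
  refine ae_eq_zero_of_le_volterra (by fun_prop) hkernel ENNReal.coe_ne_top hM ?_
  filter_upwards [hC₁, hC₂, Measure.ae_ae_of_ae_prod (enorm_sub_le_lintegral_nonlinGap hα h₁ h₂)]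
    with t ht₁ ht₂ hduhamel
  exact lintegral_nonlinGap_le_volterra h₁.1 h₂.1
    (ht₁.add ht₂ (measurable_weightedPow_uncurry h₁.1).of_uncurry_left) hduhamel

lemma IsMildSolution.ae_eq_of_henonClass [NeZero n] (hα : 1 < α) (hδ : δ < 1)
    (h₁ : IsMildSolution n γ α T u₀ u₁) (h₂ : IsMildSolution n γ α T u₀ u₂)
    (hc₁ : HenonClass n γ α δ T u₁) (hc₂ : HenonClass n γ α δ T u₂) :
    ∀ᵐ p : ℝ × Euc n ∂((volume.restrict (Ioo 0 T)).prod volume), u₁ p.1 p.2 = u₂ p.1 p.2 := by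
  have hgap : Measurable fun z : ℝ × Euc n => nonlinGap n γ α (u₁ z.1) (u₂ z.1) z.2 :=
    measurable_nonlinGap_uncurry h₁.1 h₂.1
  have hzero : ∀ᵐ z : ℝ × Euc n ∂((volume.restrict (Ioo 0 T)).prod volume),
      nonlinGap n γ α (u₁ z.1) (u₂ z.1) z.2 = 0 := by
    refine (lintegral_eq_zero_iff hgap).1 ?_
    rw [lintegral_prod _ hgap.aemeasurable]
    exact lintegral_eq_zero_of_ae_eq_zero
      (ae_lintegral_nonlinGap_eq_zero hα.le hδ h₁ h₂ hc₁ hc₂)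
  filter_upwards [hzero, Measure.quasiMeasurePreserving_snd.ae (Measure.ae_ne volume (0 : Euc n))]
    with z hz hz₀
  exact eq_of_nonlinGap_eq_zero hα hz₀ hz

end Uniqueness

section CriticalHerz

variable {n : ℕ} {γ α s T : ℝ} {q r : ℝ≥0∞} {u : ℝ → Euc n → ℝ}

lemma henonClass_of_essSup_herzNorm_lt_top [NeZero n] (hγ : -(n : ℝ) < γ) (hα : 1 < α)
    (hγs : γ / (α - 1) ≤ s) (hq : ENNReal.ofReal α ≤ q) (hr : 0 < r) (hrα : r ≤ ENNReal.ofReal α)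
    (hs : s + n * (q⁻¹).toReal = (n + γ) / α) (hu : Measurable (Function.uncurry u))
    (hbdd : essSup (fun t => herzNorm n s q r (u t)) (volume.restrict (Ioo 0 T)) < ⊤) :
    HenonClass n γ α (((α - 1) * ((n + γ) / α) - γ) / 2) T u := by
  have hα₀ : 0 < α := one_pos.trans hα
  have hα₁ : 0 < α - 1 := sub_pos.2 hα
  have hq₀ : q ≠ 0 := ((ENNReal.ofReal_pos.2 hα₀).trans_le hq).ne'
  have hslice : ∀ t, Measurable (u t) := fun t => hu.of_uncurry_left
  obtain ⟨B, hherz⟩ : ∃ B : ℝ≥0, ∀ᵐ t ∂volume.restrict (Ioo 0 T), herzNorm n s q r (u t) ≤ B :=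
    ⟨_, (ENNReal.coe_toNNReal hbdd.ne).symm ▸ ENNReal.ae_le_essSup _⟩
  have hsub : (α - 1) * (s + n * (q⁻¹).toReal) < n + γ := by
    rw [hs, ← mul_div_assoc, div_lt_iff₀ hα₀]
    nlinarith
  constructor
  · obtain ⟨C, hC⟩ := exists_lintegral_weightedPow_le_herzNorm hα₀ hr.ne' hrα hq hs
    refine ⟨C * B ^ α, ?_⟩
    filter_upwards [hherz] with t ht
    rw [ENNReal.coe_mul, ENNReal.coe_rpow_of_nonneg _ hα₀.le]
    refine (hC (u t) (hslice t)).trans ?_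
    gcongr
  · obtain ⟨C, hC⟩ :=
      lintegral_weightedPow_mul_heatKernel_le hα₁ hq₀ ((div_le_iff₀' hα₁).1 hγs) hsub
    refine ⟨C * (Real.toNNReal (2 ^ |s|) * B) ^ (α - 1), ?_⟩
    filter_upwards [hherz] with t ht σ hσ y
    have hweighted : eLpNorm (fun x : Euc n => ‖x‖ ^ s * u t x) q ≤
        ↑(Real.toNNReal (2 ^ |s|) * B) :=
      (eLpNorm_norm_rpow_mul_le_herzNorm hr.ne' (hrα.trans hq)).trans
        (by rw [ENNReal.coe_mul]; exact mul_le_mul_right ht _)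
    rw [← hs, ENNReal.coe_mul, mul_right_comm, ENNReal.coe_rpow_of_nonneg _ hα₁.le]
    refine (hC (u t) (hslice t) σ hσ y).trans ?_
    gcongr

lemma decay_exponent_lt_one {d : ℝ} (hd : 0 < d) (hα : 1 < α)
    (hlt : (d + γ) / (d * α) < (2 + γ) / (d * (α - 1))) :
    ((α - 1) * ((d + γ) / α) - γ) / 2 < 1 := by
  have hα₁ : 0 < α - 1 := sub_pos.2 hα
  rw [mul_comm d, mul_comm d, ← div_div, ← div_div, div_lt_div_iff_of_pos_right hd,
    lt_div_iff₀' hα₁] at hlt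
  linarith

/-- The Herz triples `(s, q, r)` of the single critical case: `s/n + 1/q = 1/Q_c`, `r ≤ α ≤ q` and
`γ/(α-1) ≤ s`. As `(⊤ : ℝ≥0∞)⁻¹ = 0`, the real number `(q⁻¹).toReal` is `1/q` also for `q = ∞`. -/
structure IsCriticalTriple (n : ℕ) (γ α s : ℝ) (q r : ℝ≥0∞) : Prop where
  div_le_weight : γ / (α - 1) ≤ s
  ofReal_le : ENNReal.ofReal α ≤ q
  pos : 0 < r
  le_ofReal : r ≤ ENNReal.ofReal α
  critical : s / n + (q⁻¹).toReal = (n + γ) / (n * α)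

lemma IsCriticalTriple.henonClass [NeZero n] (h : IsCriticalTriple n γ α s q r)
    (hγ : -(n : ℝ) < γ) (hα : 1 < α) (hu : Measurable (Function.uncurry u))
    (hbdd : essSup (fun t => herzNorm n s q r (u t)) (volume.restrict (Ioo 0 T)) < ⊤) :
    HenonClass n γ α (((α - 1) * ((n + γ) / α) - γ) / 2) T u := by
  have hn : (n : ℝ) ≠ 0 := NeZero.ne _
  have hs : s + n * (q⁻¹).toReal = (n + γ) / α := by
    rw [← mul_div_cancel₀ s hn, ← mul_add, h.critical, mul_comm (n : ℝ) α, ← div_div,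
      mul_div_cancel₀ _ hn]
  exact henonClass_of_essSup_herzNorm_lt_top hγ hα h.div_le_weight h.ofReal_le h.pos h.le_ofReal
    hs hu hbdd

end CriticalHerz

theorem uniqueness_single_critical_I_general (n : ℕ) [NeZero n] {γ α T s₁ s₂ : ℝ}
    {q₁ q₂ r₁ r₂ : ℝ≥0∞} (hγ : -(n : ℝ) < γ) (hα : 1 < α)
    (hlt : ((n : ℝ) + γ) / (n * α) < (2 + γ) / (n * (α - 1)))
    (hcrit₁ : IsCriticalTriple n γ α s₁ q₁ r₁) (hcrit₂ : IsCriticalTriple n γ α s₂ q₂ r₂)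
    {u₀ : Euc n → ℝ} {u₁ u₂ : ℝ → Euc n → ℝ}
    (h₁ : IsMildSolution n γ α T u₀ u₁) (h₂ : IsMildSolution n γ α T u₀ u₂)
    (hb₁ : essSup (fun t => herzNorm n s₁ q₁ r₁ (u₁ t)) (volume.restrict (Ioo 0 T)) < ⊤)
    (hb₂ : essSup (fun t => herzNorm n s₂ q₂ r₂ (u₂ t)) (volume.restrict (Ioo 0 T)) < ⊤) :
    ∀ᵐ p : ℝ × Euc n ∂((volume.restrict (Ioo 0 T)).prod volume), u₁ p.1 p.2 = u₂ p.1 p.2 := by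
  have hn : (0 : ℝ) < n := Nat.cast_pos.2 (NeZero.pos n)
  exact h₁.ae_eq_of_henonClass hα (decay_exponent_lt_one hn hα hlt) h₂
    (hcrit₁.henonClass hγ hα h₁.1 hb₁) (hcrit₂.henonClass hγ hα h₂.1 hb₂)

/-- Unconditional uniqueness for the Hardy–Hénon equation in the single critical case I:
`s/n + 1/q = 1/Q_c < 1/q_c` and `r ≤ α`, where `1/q_c = (2+γ)/(n(α-1))` and
`1/Q_c = (n+γ)/(nα)`. -/
theorem uniqueness_single_critical_I
    (n : ℕ) (hn : 1 ≤ n) (γ α s T : ℝ) (q r : ℝ≥0∞)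
    (hγ : -(min 2 (n : ℝ)) < γ) (hα : 1 < α)
    (hα' : max 1 (1 + γ / (n : ℝ)) ≤ α)
    (hs1 : γ / (α - 1) ≤ s) (hs2 : s ≤ (n : ℝ))
    (hq : ENNReal.ofReal α ≤ q) (hr : 0 < r)
    (hwd1 : 0 < s / (n : ℝ) + (q⁻¹).toReal ∨
      (s / (n : ℝ) + (q⁻¹).toReal = 0 ∧ r = ⊤))
    (hwd2 : s / (n : ℝ) + (q⁻¹).toReal < 1 ∨
      (s / (n : ℝ) + (q⁻¹).toReal = 1 ∧ r ≤ 1))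
    (hcrit : s / (n : ℝ) + (q⁻¹).toReal = ((n : ℝ) + γ) / ((n : ℝ) * α))
    (hlt : ((n : ℝ) + γ) / ((n : ℝ) * α) < (2 + γ) / ((n : ℝ) * (α - 1)))
    (hrα : r ≤ ENNReal.ofReal α)
    (hT : 0 < T) (u₀ : Euc n → ℝ) (hu₀ : Measurable u₀)
    (u₁ u₂ : ℝ → Euc n → ℝ)
    (h₁ : IsMildSolution n γ α T u₀ u₁) (h₂ : IsMildSolution n γ α T u₀ u₂)
    (hb₁ : essSup (fun t => herzNorm n s q r (u₁ t)) (volume.restrict (Set.Ioo (0 : ℝ) T)) < ⊤)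
    (hb₂ : essSup (fun t => herzNorm n s q r (u₂ t)) (volume.restrict (Set.Ioo (0 : ℝ) T)) < ⊤) :
    ∀ᵐ p : ℝ × Euc n ∂((volume.restrict (Set.Ioo (0 : ℝ) T)).prod volume),
      u₁ p.1 p.2 = u₂ p.1 p.2 := by
  have : NeZero n := ⟨by omega⟩
  have hcritical : IsCriticalTriple n γ α s q r := ⟨hs1, hq, hr, hrα, hcrit⟩
  exact uniqueness_single_critical_I_general n ((neg_le_neg (min_le_right _ _)).trans_lt hγ) hα hlt
    hcritical hcritical h₁ h₂ hb₁ hb₂
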